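/- Let 0 < b < 1, p > 0, and let u₂ be the characteristic function of the closed ellipse pE^{b,0} = { (x₁,x₂) : (x₁/p)² + (x₂/(pb))² ≤ 1 }, with pE^{b,0} ⊂ Ω. Then for every a ∈ (0,1], with orientation angle θ = 0, DTV^{a,0}(u₂) = p ∫₀^{2π} ( b² cos²τ + a² sin²τ )^{1/2} dτ. -/

import Mathlib

open MeasureTheory Filter
open scoped ENNReal Topology Pointwise

noncomputable section

abbrev E2 := EuclideanSpace ℝ (Fin 2)

/-- Build a vector of `ℝ²` from its coordinates. -/
def vec2 (x y : ℝ) : E2 := (WithLp.equiv 2 (Fin 2 → ℝ)).symm ![x, y]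

/-- The elliptical set `E^{a,θ}`. -/
def Ellip (a θ : ℝ) : Set E2 :=
  {x : E2 | (x 0 * Real.cos θ + x 1 * Real.sin θ) ^ 2 +
      ((-(x 0) * Real.sin θ + x 1 * Real.cos θ) / a) ^ 2 ≤ 1}

/-- Partial derivative in the `i`-th coordinate direction. -/
def pd (i : Fin 2) (f : E2 → ℝ) (x : E2) : ℝ :=
  fderiv ℝ f x (EuclideanSpace.single i 1)

/-- Divergence of a vector field on `ℝ²`. -/
def divVec (v : E2 → E2) (x : E2) : ℝ :=
  pd 0 (fun y => v y 0) x + pd 1 (fun y => v y 1) x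

/-- `C¹` vector fields compactly supported in `Ω`. -/
def Cc1 (Ω : Set E2) (v : E2 → E2) : Prop :=
  ContDiff ℝ 1 v ∧ HasCompactSupport v ∧ tsupport v ⊆ Ω

/-- The directional total variation `DTV^{a,θ}`. -/
def DTV (Ω : Set E2) (a θ : ℝ) (u : E2 → ℝ) : ℝ≥0∞ :=
  ⨆ v ∈ {v : E2 → E2 | Cc1 Ω v ∧ ∀ x ∈ Ω, v x ∈ Ellip a θ},
    ENNReal.ofReal (∫ x in Ω, u x * divVec v x)

/-- The total variation. -/
def TV (Ω : Set E2) (u : E2 → ℝ) : ℝ≥0∞ :=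
  ⨆ v ∈ {v : E2 → E2 | Cc1 Ω v ∧ ∀ x ∈ Ω, ‖v x‖ ≤ 1},
    ENNReal.ofReal (∫ x in Ω, u x * divVec v x)

abbrev Mat2 := Matrix (Fin 2) (Fin 2) ℝ

/-- The rotation matrix `R_θ`. -/
def Rmat (θ : ℝ) : Mat2 := !![Real.cos θ, -Real.sin θ; Real.sin θ, Real.cos θ]

/-- The matrix `Λ_a = diag(1,a)`. -/
def Lmat (a : ℝ) : Mat2 := !![1, 0; 0, a]

/-- Symmetric `2×2` matrices whose rows and columns lie in `S ⊆ ℝ²`. -/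
def rowcol (S : Set E2) : Set Mat2 :=
  {V : Mat2 | V.IsSymm ∧ (∀ i : Fin 2, vec2 (V i 0) (V i 1) ∈ S) ∧
    ∀ j : Fin 2, vec2 (V 0 j) (V 1 j) ∈ S}

/-- `E^{a,θ}_{2×2}`. -/
def EllipM (a θ : ℝ) : Set Mat2 := rowcol (Ellip a θ)

/-- `B_{2×2}`. -/
def BallM : Set Mat2 := rowcol (Metric.closedBall 0 1)

/-- Divergence of a (symmetric) matrix field. -/
def divMat (W : E2 → Mat2) (x : E2) : E2 :=
  vec2 (pd 0 (fun y => W y 0 0) x + pd 1 (fun y => W y 0 1) x)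
    (pd 0 (fun y => W y 1 0) x + pd 1 (fun y => W y 1 1) x)

/-- Second-order divergence of a matrix field. -/
def div2Mat (W : E2 → Mat2) (x : E2) : ℝ :=
  pd 0 (pd 0 (fun y => W y 0 0)) x + pd 1 (pd 1 (fun y => W y 1 1)) x +
    2 * pd 0 (pd 1 (fun y => W y 0 1)) x

/-- `C²` symmetric-matrix fields compactly supported in `Ω`. -/
def Cc2Sym (Ω : Set E2) (W : E2 → Mat2) : Prop :=
  (∀ i j : Fin 2, ContDiff ℝ 2 (fun x => W x i j)) ∧ HasCompactSupport W ∧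
    tsupport W ⊆ Ω ∧ ∀ x, (W x).IsSymm

/-- The second-order directional total generalized variation `DTGV²_λ`. -/
def DTGV2 (Ω : Set E2) (a θ l0 l1 : ℝ) (u : E2 → ℝ) : ℝ≥0∞ :=
  ⨆ W ∈ {W : E2 → Mat2 | Cc2Sym Ω W ∧ (∀ x ∈ Ω, W x ∈ l0 • EllipM a θ) ∧
      ∀ x ∈ Ω, divMat W x ∈ l1 • Ellip a θ},
    ENNReal.ofReal (∫ x in Ω, u x * div2Mat W x)

/-- The second-order total generalized variation `TGV²_λ`. -/
def TGV2 (Ω : Set E2) (l0 l1 : ℝ) (u : E2 → ℝ) : ℝ≥0∞ :=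
  ⨆ W ∈ {W : E2 → Mat2 | Cc2Sym Ω W ∧ (∀ x ∈ Ω, W x ∈ l0 • BallM) ∧
      ∀ x ∈ Ω, divMat W x ∈ Metric.closedBall 0 l1},
    ENNReal.ofReal (∫ x in Ω, u x * div2Mat W x)

/-- The closed ellipse `pE^{b,0}` with semi-axes `p` and `pb`. -/
def pEllipse (p b : ℝ) : Set E2 := {x : E2 | (x 0 / p) ^ 2 + (x 1 / (p * b)) ^ 2 ≤ 1}

/-!
Write `γ τ = p (cos τ, b sin τ)` for the boundary of the ellipse. For a `C¹` field `v`,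
differentiating along the rays `r ↦ r γ(τ)` gives
`r (γ × γ') (div v)(r γ) = ∂_r (r v(r γ) × γ') + ∂_τ (γ × v(r γ))`,
so the divergence theorem on the parameter rectangle turns `∫ div v` over the ellipse into
`∫ ⟪ν, v⟫ dτ`, where `ν = p (b cos τ, sin τ)` is the outer normal of length `|γ'|`.

For admissible `v` the integrand is at most the support function of `E^{a,θ}` at `ν`. The bound is
attained: the gradient of the support function is a maximizer, smooth away from the origin, and
`ν` extends to a linear field that does not vanish on the boundary, so composing the two and cutting
off near the boundary gives an admissible field.
-/

section Plane

lemma vec2_apply_zero (x y : ℝ) : vec2 x y 0 = x := rfl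

lemma vec2_apply_one (x y : ℝ) : vec2 x y 1 = y := rfl

lemma inner_E2 (x y : E2) : inner ℝ x y = x 0 * y 0 + x 1 * y 1 := by
  simp [PiLp.inner_apply, Fin.sum_univ_two, mul_comm]

lemma eq_smul_single_add_smul_single (x : E2) :
    x = x 0 • EuclideanSpace.single (0 : Fin 2) (1 : ℝ) +
      x 1 • EuclideanSpace.single (1 : Fin 2) (1 : ℝ) := by
  ext i
  fin_cases i <;> simp

@[fun_prop]
lemma contDiff_vec2 {E : Type*} [NormedAddCommGroup E] [NormedSpace ℝ E] {n : WithTop ℕ∞}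
    {f g : E → ℝ} (hf : ContDiff ℝ n f) (hg : ContDiff ℝ n g) :
    ContDiff ℝ n fun z => vec2 (f z) (g z) :=
  contDiff_euclidean.2 <| Fin.forall_fin_two.2 ⟨hf, hg⟩

lemma hasDerivAt_vec2 {f g : ℝ → ℝ} {f' g' t : ℝ} (hf : HasDerivAt f f' t)
    (hg : HasDerivAt g g' t) : HasDerivAt (fun s => vec2 (f s) (g s)) (vec2 f' g') t :=
  have hcoord : HasDerivAt (fun s => ![f s, g s]) ![f', g'] t :=
    hasDerivAt_pi.2 <| Fin.forall_fin_two.2 ⟨hf, hg⟩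
  HasFDerivAt.comp_hasDerivAt (f := fun s => ![f s, g s]) t
    (PiLp.hasFDerivAt_toLp (𝕜 := ℝ) 2 ![f t, g t]) hcoord

lemma integral_comp_vec2 {F : Type*} [NormedAddCommGroup F] [NormedSpace ℝ F] (f : E2 → F) :
    ∫ z : ℝ × ℝ, f (vec2 z.1 z.2) = ∫ x, f x := by
  let e : ℝ × ℝ ≃ᵐ E2 :=
    MeasurableEquiv.finTwoArrow.symm.trans (MeasurableEquiv.toLp 2 (Fin 2 → ℝ))
  have he : MeasurePreserving e volume volume :=
    (PiLp.volume_preserving_toLp (Fin 2)).comp (volume_preserving_finTwoArrow ℝ).symm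
  exact he.integral_comp' f

lemma integral_comp_mul_prod {F : Type*} [NormedAddCommGroup F] [NormedSpace ℝ F] {s t : ℝ}
    (hs : s ≠ 0) (ht : t ≠ 0) (f : ℝ × ℝ → F) :
    |s * t| • ∫ z : ℝ × ℝ, f (s * z.1, t * z.2) = ∫ z, f z := by
  let L : ℝ × ℝ →L[ℝ] ℝ × ℝ :=
    (s • ContinuousLinearMap.id ℝ ℝ).prodMap (t • ContinuousLinearMap.id ℝ ℝ)
  have hdet : L.det = s * t := by
    simp [L, ContinuousLinearMap.det, LinearMap.det_prodMap]
  have hbij : Function.Bijective L :=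
    (mulLeft_bijective₀ s hs).prodMap (mulLeft_bijective₀ t ht)
  have h := integral_image_eq_integral_abs_det_fderiv_smul volume MeasurableSet.univ
    (fun z _ => L.hasFDerivAt.hasFDerivWithinAt) hbij.injective.injOn f
  rw [Set.image_univ, hbij.surjective.range_eq, setIntegral_univ, setIntegral_univ, hdet,
    integral_smul] at h
  exact h.symm

/-- The planar cross product, i.e. the determinant with columns `x` and `y`. -/
def planeCross (x y : E2) : ℝ := x 0 * y 1 - x 1 * y 0

lemma hasDerivAt_planeCross {f g : ℝ → E2} {f' g' : E2} {t : ℝ} (hf : HasDerivAt f f' t)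
    (hg : HasDerivAt g g' t) :
    HasDerivAt (fun s => planeCross (f s) (g s)) (planeCross f' (g t) + planeCross (f t) g') t := by
  have hcoord {h : ℝ → E2} {h' : E2} (hh : HasDerivAt h h' t) (i : Fin 2) :
      HasDerivAt (fun s => h s i) (h' i) t :=
    (EuclideanSpace.proj i : E2 →L[ℝ] ℝ).hasFDerivAt.comp_hasDerivAt t hh
  refine (((hcoord hf 0).mul (hcoord hg 1)).sub ((hcoord hf 1).mul (hcoord hg 0))).congr_deriv ?_
  simp only [planeCross]
  ring

@[fun_prop]
lemma contDiff_planeCross {E : Type*} [NormedAddCommGroup E] [NormedSpace ℝ E]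
    {n : WithTop ℕ∞} {f g : E → E2} (hf : ContDiff ℝ n f) (hg : ContDiff ℝ n g) :
    ContDiff ℝ n fun z => planeCross (f z) (g z) := by
  unfold planeCross
  fun_prop

end Plane

section Divergence

lemma divVec_eq_fderiv {v : E2 → E2} {x : E2} (hv : DifferentiableAt ℝ v x) :
    divVec v x = fderiv ℝ v x (EuclideanSpace.single 0 1) 0 +
      fderiv ℝ v x (EuclideanSpace.single 1 1) 1 := by
  have hpd (i : Fin 2) :
      pd i (fun y => v y i) x = fderiv ℝ v x (EuclideanSpace.single i 1) i := by
    have h : HasFDerivAt (fun y => v y i)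
        ((EuclideanSpace.proj i : E2 →L[ℝ] ℝ) ∘L fderiv ℝ v x) x :=
      (EuclideanSpace.proj i : E2 →L[ℝ] ℝ).hasFDerivAt.comp x hv.hasFDerivAt
    rw [pd, h.fderiv]
    rfl
  rw [divVec, hpd, hpd]

lemma continuous_divVec {v : E2 → E2} (hv : ContDiff ℝ 1 v) : Continuous (divVec v) := by
  have hv' : Continuous (fderiv ℝ v) := hv.continuous_fderiv one_ne_zero
  simp_rw [funext fun x => divVec_eq_fderiv (hv.differentiable one_ne_zero x)]
  fun_prop

-- In the plane, `det (T y, z) + det (y, T z) = tr T * det (y, z)`.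
lemma planeCross_fderiv_add {v : E2 → E2} {x : E2} (hv : DifferentiableAt ℝ v x) (y z : E2) :
    planeCross (fderiv ℝ v x y) z + planeCross y (fderiv ℝ v x z) =
      divVec v x * planeCross y z := by
  have happly (w : E2) (i : Fin 2) : fderiv ℝ v x w i =
      w 0 * fderiv ℝ v x (EuclideanSpace.single 0 1) i +
        w 1 * fderiv ℝ v x (EuclideanSpace.single 1 1) i := by
    conv_lhs => rw [eq_smul_single_add_smul_single w, map_add, map_smul, map_smul]
    rfl
  simp only [divVec_eq_fderiv hv, planeCross, happly y, happly z]
  ring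

lemma fderiv_apply_one_zero {F : Type*} [NormedAddCommGroup F] [NormedSpace ℝ F]
    {f : ℝ × ℝ → F} {r t : ℝ} {d : F} (hf : DifferentiableAt ℝ f (r, t))
    (h : HasDerivAt (fun s => f (s, t)) d r) : fderiv ℝ f (r, t) (1, 0) = d := by
  have hcomp : HasDerivAt (fun s => f (s, t)) (fderiv ℝ f (r, t) (1, 0)) r :=
    hf.hasFDerivAt.comp_hasDerivAt r ((hasDerivAt_id r).prodMk (hasDerivAt_const r t))
  exact hcomp.unique h

lemma fderiv_apply_zero_one {F : Type*} [NormedAddCommGroup F] [NormedSpace ℝ F]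
    {f : ℝ × ℝ → F} {r t : ℝ} {d : F} (hf : DifferentiableAt ℝ f (r, t))
    (h : HasDerivAt (fun s => f (r, s)) d t) : fderiv ℝ f (r, t) (0, 1) = d := by
  have hcomp : HasDerivAt (fun s => f (r, s)) (fderiv ℝ f (r, t) (0, 1)) t :=
    hf.hasFDerivAt.comp_hasDerivAt t ((hasDerivAt_const t r).prodMk (hasDerivAt_id t))
  exact hcomp.unique h

variable {v : E2 → E2} {γ : ℝ → E2}

lemma fderiv_radial_add_fderiv_angular (hv : ContDiff ℝ 1 v) (hγ : ContDiff ℝ 2 γ) (z : ℝ × ℝ) :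
    fderiv ℝ (fun z : ℝ × ℝ => z.1 * planeCross (v (z.1 • γ z.2)) (deriv γ z.2)) z (1, 0) +
        fderiv ℝ (fun z : ℝ × ℝ => planeCross (γ z.2) (v (z.1 • γ z.2))) z (0, 1) =
      z.1 * planeCross (γ z.2) (deriv γ z.2) * divVec v (z.1 • γ z.2) := by
  obtain ⟨r, t⟩ := z
  have hγ₁ : ContDiff ℝ 1 γ := hγ.of_le one_le_two
  have hγ' : ContDiff ℝ 1 (deriv γ) := hγ.deriv'
  have hv_at := hv.differentiable one_ne_zero (r • γ t)
  have hγ_deriv : HasDerivAt γ (deriv γ t) t := (hγ₁.differentiable one_ne_zero t).hasDerivAt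
  have hradial : HasDerivAt (fun s => v (s • γ t)) (fderiv ℝ v (r • γ t) (γ t)) r := by
    have hline : HasDerivAt (fun s : ℝ => s • γ t) (γ t) r := by
      simpa using (hasDerivAt_id r).smul_const (γ t)
    exact hv_at.hasFDerivAt.comp_hasDerivAt r hline
  have hangular : HasDerivAt (fun s => v (r • γ s)) (r • fderiv ℝ v (r • γ t) (deriv γ t)) t := by
    rw [← map_smul]
    exact HasFDerivAt.comp_hasDerivAt (f := r • γ) t hv_at.hasFDerivAt (hγ_deriv.const_smul r)
  rw [fderiv_apply_one_zero (ContDiff.differentiable (by fun_prop) one_ne_zero _)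
      ((hasDerivAt_id r).mul (hasDerivAt_planeCross hradial (hasDerivAt_const r (deriv γ t)))),
    fderiv_apply_zero_one (ContDiff.differentiable (by fun_prop) one_ne_zero _)
      (hasDerivAt_planeCross hγ_deriv hangular)]
  have htrace := planeCross_fderiv_add hv_at (γ t) (deriv γ t)
  simp only [planeCross, PiLp.smul_apply, PiLp.zero_apply, smul_eq_mul, id] at htrace ⊢
  linear_combination r * htrace

lemma integral_divVec_cone (hv : ContDiff ℝ 1 v) (hγ : ContDiff ℝ 2 γ) {s t : ℝ} (hst : s ≤ t)
    (hclosed : γ s = γ t) :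
    ∫ z in Set.Icc ((0 : ℝ), s) (1, t),
        z.1 * planeCross (γ z.2) (deriv γ z.2) * divVec v (z.1 • γ z.2) =
      ∫ τ in s..t, planeCross (v (γ τ)) (deriv γ τ) := by
  have hγ₁ : ContDiff ℝ 1 γ := hγ.of_le one_le_two
  have hγ' : ContDiff ℝ 1 (deriv γ) := hγ.deriv'
  have hdiv := continuous_divVec hv
  have hradial : ContDiff ℝ 1
      fun z : ℝ × ℝ => z.1 * planeCross (v (z.1 • γ z.2)) (deriv γ z.2) := by fun_prop
  have hangular : ContDiff ℝ 1 fun z : ℝ × ℝ => planeCross (γ z.2) (v (z.1 • γ z.2)) := by fun_prop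
  have hcross : Continuous fun τ => planeCross (γ τ) (deriv γ τ) :=
    (contDiff_planeCross hγ₁ hγ').continuous
  have hbox := integral_divergence_prod_Icc_of_hasFDerivAt_of_le _ _ _ _ (0, s) (1, t)
    ⟨zero_le_one, hst⟩ hradial.continuous.continuousOn hangular.continuous.continuousOn
    (fun z _ => (hradial.differentiable one_ne_zero z).hasFDerivAt)
    (fun z _ => (hangular.differentiable one_ne_zero z).hasFDerivAt)
    (by
      simp only [fderiv_radial_add_fderiv_angular hv hγ]
      exact Continuous.integrableOn_Icc (by fun_prop))
  simpa [fderiv_radial_add_fderiv_angular hv hγ, hclosed] using hbox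

end Divergence

section Ellipse

/-- The boundary of `pE^{b,0}`, parametrised by the eccentric anomaly. -/
def ellipseCurve (p b τ : ℝ) : E2 := vec2 (p * Real.cos τ) (p * b * Real.sin τ)

/-- A linear field which on the boundary of `pE^{b,0}` is normal, with length the speed of
`ellipseCurve p b`, for every `p`. -/
def ellipseNormal (b : ℝ) (x : E2) : E2 := vec2 (b * x 0) (b⁻¹ * x 1)

variable {p b : ℝ}

@[fun_prop]
lemma contDiff_ellipseCurve {n : WithTop ℕ∞} : ContDiff ℝ n (ellipseCurve p b) := by
  unfold ellipseCurve
  fun_prop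

@[fun_prop]
lemma contDiff_ellipseNormal {n : WithTop ℕ∞} : ContDiff ℝ n (ellipseNormal b) := by
  unfold ellipseNormal
  fun_prop

lemma ellipseNormal_ellipseCurve (hb : b ≠ 0) (τ : ℝ) :
    ellipseNormal b (ellipseCurve p b τ) = p • vec2 (b * Real.cos τ) (Real.sin τ) := by
  ext i
  fin_cases i <;> simp [ellipseNormal, ellipseCurve, vec2] <;> field_simp

lemma ellipseNormal_ellipseCurve_ne_zero (hp : p ≠ 0) (hb : b ≠ 0) (τ : ℝ) :
    ellipseNormal b (ellipseCurve p b τ) ≠ 0 := by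
  rw [ellipseNormal_ellipseCurve hb, smul_ne_zero_iff]
  refine ⟨hp, fun h => ?_⟩
  have hcos : b * Real.cos τ = 0 := congr($h 0)
  have hsin : Real.sin τ = 0 := congr($h 1)
  simpa [hsin, (mul_eq_zero.1 hcos).resolve_left hb] using Real.sin_sq_add_cos_sq τ

lemma deriv_ellipseCurve (τ : ℝ) :
    deriv (ellipseCurve p b) τ = vec2 (-(p * Real.sin τ)) (p * b * Real.cos τ) := by
  rw [← mul_neg]
  exact (hasDerivAt_vec2 ((Real.hasDerivAt_cos τ).const_mul p)
    ((Real.hasDerivAt_sin τ).const_mul (p * b))).deriv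

lemma planeCross_deriv_ellipseCurve (hb : b ≠ 0) (x : E2) (τ : ℝ) :
    planeCross x (deriv (ellipseCurve p b) τ) =
      inner ℝ (ellipseNormal b (ellipseCurve p b τ)) x := by
  simp only [ellipseNormal_ellipseCurve hb, deriv_ellipseCurve, planeCross, inner_E2,
    PiLp.smul_apply, vec2_apply_zero, vec2_apply_one, smul_eq_mul]
  ring

lemma planeCross_ellipseCurve_deriv (τ : ℝ) :
    planeCross (ellipseCurve p b τ) (deriv (ellipseCurve p b) τ) = p * (p * b) := by
  simp only [deriv_ellipseCurve, planeCross, ellipseCurve, vec2_apply_zero, vec2_apply_one]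
  linear_combination p * (p * b) * Real.sin_sq_add_cos_sq τ

lemma smul_ellipseCurve_mem_pEllipse (hp : p ≠ 0) (hb : b ≠ 0) {r τ : ℝ} :
    r • ellipseCurve p b τ ∈ pEllipse p b ↔ |r| ≤ 1 := by
  have hradius : (r * (p * Real.cos τ) / p) ^ 2 + (r * (p * b * Real.sin τ) / (p * b)) ^ 2 =
      r ^ 2 := by
    field_simp
    linear_combination r ^ 2 * Real.cos_sq_add_sin_sq τ
  change (r * (p * Real.cos τ) / p) ^ 2 + (r * (p * b * Real.sin τ) / (p * b)) ^ 2 ≤ 1 ↔ _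
  rw [hradius, sq_le_one_iff_abs_le_one]

lemma ellipseCurve_mem_pEllipse (hp : p ≠ 0) (hb : b ≠ 0) (τ : ℝ) :
    ellipseCurve p b τ ∈ pEllipse p b := by
  simpa using (smul_ellipseCurve_mem_pEllipse hp hb (r := 1) (τ := τ)).2 abs_one.le

lemma measurableSet_pEllipse : MeasurableSet (pEllipse p b) := by
  unfold pEllipse
  exact measurableSet_le (by fun_prop) measurable_const

variable {F : Type*} [NormedAddCommGroup F] [NormedSpace ℝ F]

lemma smul_indicator_pEllipse (hp : p ≠ 0) (hb : b ≠ 0) (f : E2 → F) {z : ℝ × ℝ}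
    (hz : z ∈ polarCoord.target) :
    z.1 • (pEllipse p b).indicator f (z.1 • ellipseCurve p b z.2) =
      (Set.Ioc (0 : ℝ) 1 ×ˢ Set.Ioo (-Real.pi) Real.pi).indicator
        (fun z => z.1 • f (z.1 • ellipseCurve p b z.2)) z := by
  have hr : 0 < z.1 := hz.1
  have hmem : z.1 • ellipseCurve p b z.2 ∈ pEllipse p b ↔
      z ∈ Set.Ioc (0 : ℝ) 1 ×ˢ Set.Ioo (-Real.pi) Real.pi := by
    rw [smul_ellipseCurve_mem_pEllipse hp hb, abs_of_pos hr]
    exact ⟨fun h => ⟨⟨hr, h⟩, hz.2⟩, fun h => h.1.2⟩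
  simp only [Set.indicator, hmem, smul_ite, smul_zero]

lemma setIntegral_pEllipse (hp : 0 < p) (hb : 0 < b) (f : E2 → F) :
    ∫ x in pEllipse p b, f x =
      ∫ z in Set.Icc ((0 : ℝ), -Real.pi) (1, Real.pi),
        (z.1 * (p * (p * b))) • f (z.1 • ellipseCurve p b z.2) := by
  set g : E2 → F := (pEllipse p b).indicator f
  have hcurve (r τ : ℝ) : vec2 (p * (r * Real.cos τ)) (p * b * (r * Real.sin τ)) =
      r • ellipseCurve p b τ := by
    ext i
    fin_cases i <;> simp [ellipseCurve, vec2] <;> ring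
  have hrect : Set.Icc ((0 : ℝ), -Real.pi) (1, Real.pi) =ᵐ[volume]
      Set.Ioc 0 1 ×ˢ Set.Ioo (-Real.pi) Real.pi := by
    rw [← Set.Icc_prod_Icc]
    exact (Measure.set_prod_ae_eq Ioc_ae_eq_Icc Ioo_ae_eq_Icc).symm
  have hsub : Set.Ioc (0 : ℝ) 1 ×ˢ Set.Ioo (-Real.pi) Real.pi ⊆ polarCoord.target :=
    Set.prod_mono Set.Ioc_subset_Ioi_self subset_rfl
  calc ∫ x in pEllipse p b, f x
      = ∫ z : ℝ × ℝ, g (vec2 z.1 z.2) := by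
        rw [integral_comp_vec2, integral_indicator measurableSet_pEllipse]
    _ = (p * (p * b)) • ∫ z : ℝ × ℝ, g (vec2 (p * z.1) (p * b * z.2)) := by
        rw [← integral_comp_mul_prod hp.ne' (mul_pos hp hb).ne', abs_of_pos (by positivity)]
    _ = (p * (p * b)) • ∫ z in polarCoord.target, z.1 • g (z.1 • ellipseCurve p b z.2) := by
        rw [← integral_comp_polarCoord_symm]
        simp only [polarCoord_symm_apply, hcurve]
    _ = (p * (p * b)) • ∫ z in Set.Icc ((0 : ℝ), -Real.pi) (1, Real.pi),
          z.1 • f (z.1 • ellipseCurve p b z.2) := by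
        rw [setIntegral_congr_fun polarCoord.open_target.measurableSet
            fun z hz => smul_indicator_pEllipse hp.ne' hb.ne' f hz,
          setIntegral_indicator (measurableSet_Ioc.prod measurableSet_Ioo),
          Set.inter_eq_self_of_subset_right hsub, setIntegral_congr_set hrect]
    _ = _ := by
        simp only [← integral_smul, smul_smul, mul_comm]

lemma integral_divVec_pEllipse (hp : 0 < p) (hb : 0 < b) {v : E2 → E2} (hv : ContDiff ℝ 1 v) :
    ∫ x in pEllipse p b, divVec v x =
      ∫ τ in (-Real.pi)..Real.pi,
        inner ℝ (ellipseNormal b (ellipseCurve p b τ)) (v (ellipseCurve p b τ)) := by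
  have hclosed : ellipseCurve p b (-Real.pi) = ellipseCurve p b Real.pi := by simp [ellipseCurve]
  have hcone := integral_divVec_cone hv contDiff_ellipseCurve (neg_le_self Real.pi_nonneg) hclosed
  simp only [planeCross_ellipseCurve_deriv] at hcone
  simpa only [setIntegral_pEllipse hp hb, smul_eq_mul, planeCross_deriv_ellipseCurve hb.ne'] using
    hcone

end Ellipse

section Support

/-- The support function `n ↦ sup {⟪n, x⟫ : x ∈ E^{a,θ}}`. -/
def ellipSupport (a θ : ℝ) (n : E2) : ℝ :=
  √((n 0 * Real.cos θ + n 1 * Real.sin θ) ^ 2 +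
    (a * (-(n 0) * Real.sin θ + n 1 * Real.cos θ)) ^ 2)

/-- The point of `E^{a,θ}` at which `⟪n, ·⟫` is maximal: the gradient of `ellipSupport a θ` at `n`
(and the origin if `n = 0`). -/
def ellipMaximizer (a θ : ℝ) (n : E2) : E2 :=
  (ellipSupport a θ n)⁻¹ •
    vec2 ((n 0 * Real.cos θ + n 1 * Real.sin θ) * Real.cos θ -
        a ^ 2 * (-(n 0) * Real.sin θ + n 1 * Real.cos θ) * Real.sin θ)
      ((n 0 * Real.cos θ + n 1 * Real.sin θ) * Real.sin θ +
        a ^ 2 * (-(n 0) * Real.sin θ + n 1 * Real.cos θ) * Real.cos θ)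

variable {a θ : ℝ}

lemma ellipSupport_sq (n : E2) : ellipSupport a θ n ^ 2 =
    (n 0 * Real.cos θ + n 1 * Real.sin θ) ^ 2 +
      (a * (-(n 0) * Real.sin θ + n 1 * Real.cos θ)) ^ 2 :=
  Real.sq_sqrt (by positivity)

lemma ellipSupport_smul {c : ℝ} (hc : 0 ≤ c) (n : E2) :
    ellipSupport a θ (c • n) = c * ellipSupport a θ n := by
  rw [ellipSupport, ellipSupport, ← Real.sqrt_sq hc, ← Real.sqrt_mul (sq_nonneg c),
    Real.sqrt_sq hc]
  simp only [PiLp.smul_apply, smul_eq_mul]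
  ring_nf

@[fun_prop]
lemma continuous_ellipSupport : Continuous (ellipSupport a θ) := by
  unfold ellipSupport
  fun_prop

lemma ellipSupport_pos (ha : a ≠ 0) {n : E2} (hn : n ≠ 0) : 0 < ellipSupport a θ n := by
  refine Real.sqrt_pos.2 ((by positivity : (0 : ℝ) ≤ _).lt_of_ne' fun h => hn ?_)
  obtain ⟨hu, hw⟩ := (add_eq_zero_iff_of_nonneg (sq_nonneg _) (sq_nonneg _)).1 h
  have hu := pow_eq_zero_iff two_ne_zero |>.1 hu
  have hw := (mul_eq_zero.1 (pow_eq_zero_iff two_ne_zero |>.1 hw)).resolve_left ha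
  have hθ := Real.sin_sq_add_cos_sq θ
  ext i
  fin_cases i
  · change n 0 = 0
    linear_combination Real.cos θ * hu - Real.sin θ * hw - n 0 * hθ
  · change n 1 = 0
    linear_combination Real.sin θ * hu + Real.cos θ * hw - n 1 * hθ

lemma inner_le_ellipSupport (ha : a ≠ 0) {x : E2} (hx : x ∈ Ellip a θ) (n : E2) :
    inner ℝ n x ≤ ellipSupport a θ n := by
  rw [Ellip, Set.mem_ofPred_eq] at hx
  set u := x 0 * Real.cos θ + x 1 * Real.sin θ
  set w := (-(x 0) * Real.sin θ + x 1 * Real.cos θ) / a with hw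
  have haw : a * w = -(x 0) * Real.sin θ + x 1 * Real.cos θ := by rw [hw]; field_simp
  set ν := n 0 * Real.cos θ + n 1 * Real.sin θ
  set μ := a * (-(n 0) * Real.sin θ + n 1 * Real.cos θ)
  have hinner : inner ℝ n x = ν * u + μ * w := by
    rw [inner_E2]
    linear_combination (-(n 0 * x 0) - n 1 * x 1) * Real.sin_sq_add_cos_sq θ -
      (-(n 0) * Real.sin θ + n 1 * Real.cos θ) * haw
  rw [hinner]
  refine Real.le_sqrt_of_sq_le ?_
  calc (ν * u + μ * w) ^ 2 ≤ (ν ^ 2 + μ ^ 2) * (u ^ 2 + w ^ 2) := by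
        linarith [sq_nonneg (ν * w - μ * u)]
    _ ≤ ν ^ 2 + μ ^ 2 := mul_le_of_le_one_right (by positivity) hx

lemma inner_ellipMaximizer (n : E2) :
    inner ℝ n (ellipMaximizer a θ n) = ellipSupport a θ n := by
  have hinner : inner ℝ n (ellipMaximizer a θ n) =
      (ellipSupport a θ n)⁻¹ * ellipSupport a θ n ^ 2 := by
    rw [ellipSupport_sq, ellipMaximizer, inner_smul_right, inner_E2, vec2_apply_zero,
      vec2_apply_one]
    ring
  rw [hinner, sq, ← mul_assoc, inv_mul_mul_self]

lemma smul_ellipMaximizer_mem_Ellip {c : ℝ} (hc : |c| ≤ 1) (n : E2) :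
    c • ellipMaximizer a θ n ∈ Ellip a θ := by
  set h := ellipSupport a θ n
  have h_nonneg : 0 ≤ h := Real.sqrt_nonneg _
  set ν := n 0 * Real.cos θ + n 1 * Real.sin θ
  set μ := -(n 0) * Real.sin θ + n 1 * Real.cos θ
  set x := c • ellipMaximizer a θ n
  have hx₀ : x 0 = c * (h⁻¹ * (ν * Real.cos θ - a ^ 2 * μ * Real.sin θ)) := rfl
  have hx₁ : x 1 = c * (h⁻¹ * (ν * Real.sin θ + a ^ 2 * μ * Real.cos θ)) := rfl
  have hu : x 0 * Real.cos θ + x 1 * Real.sin θ = c * h⁻¹ * ν := by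
    rw [hx₀, hx₁]
    linear_combination c * h⁻¹ * ν * Real.sin_sq_add_cos_sq θ
  have hw : (-(x 0) * Real.sin θ + x 1 * Real.cos θ) / a = c * h⁻¹ * (a * μ) := by
    rw [hx₀, hx₁]
    linear_combination c * h⁻¹ * (a ^ 2 / a) * μ * Real.sin_sq_add_cos_sq θ +
      c * h⁻¹ * μ * mul_self_div_self a
  have hscale : |c * (h⁻¹ * h)| ≤ 1 := by
    rw [abs_mul, abs_of_nonneg (mul_nonneg (inv_nonneg.2 h_nonneg) h_nonneg)]
    exact mul_le_one₀ hc (by positivity) inv_mul_le_one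
  calc (x 0 * Real.cos θ + x 1 * Real.sin θ) ^ 2 +
        ((-(x 0) * Real.sin θ + x 1 * Real.cos θ) / a) ^ 2
      = (c * h⁻¹) ^ 2 * (ν ^ 2 + (a * μ) ^ 2) := by rw [hu, hw]; ring
    _ = (c * (h⁻¹ * h)) ^ 2 := by rw [← ellipSupport_sq]; ring
    _ ≤ 1 := (sq_le_one_iff_abs_le_one _).2 hscale

lemma contDiffAt_ellipMaximizer {k : WithTop ℕ∞} (ha : a ≠ 0) {n : E2} (hn : n ≠ 0) :
    ContDiffAt ℝ k (ellipMaximizer a θ) n := by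
  have hsupport : ContDiffAt ℝ k (ellipSupport a θ) n :=
    ContDiffAt.sqrt (by fun_prop) (Real.sqrt_pos.1 (ellipSupport_pos ha hn)).ne'
  exact (hsupport.inv (ellipSupport_pos ha hn).ne').smul (ContDiff.contDiffAt (by fun_prop))

end Support

section Duality

lemma exists_contDiff_cutoff {E : Type*} [NormedAddCommGroup E] [NormedSpace ℝ E]
    [FiniteDimensional ℝ E] {n : ℕ∞} {K U : Set E} (hK : IsCompact K) (hU : IsOpen U)
    (hKU : K ⊆ U) :
    ∃ χ : E → ℝ, ContDiff ℝ n χ ∧ HasCompactSupport χ ∧ tsupport χ ⊆ U ∧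
      (∀ x ∈ K, χ x = 1) ∧ ∀ x, χ x ∈ Set.Icc (0 : ℝ) 1 := by
  obtain ⟨L, hL, hKL, hLU⟩ := exists_compact_between hK hU hKU
  obtain ⟨χ, hχK, hχL, hχ⟩ := exists_contMDiffMap_one_nhds_of_subset_interior (n := n)
    (modelWithCornersSelf ℝ E) hK.isClosed hKL
  have hsupp : tsupport χ ⊆ L :=
    closure_minimal (Function.support_subset_iff'.2 hχL) hL.isClosed
  exact ⟨χ, χ.contMDiff.contDiff, hL.of_isClosed_subset (isClosed_tsupport χ) hsupp,
    hsupp.trans hLU, fun x hx => hχK.self_of_nhdsSet x hx, hχ⟩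

variable {Ω : Set E2} {a p b : ℝ}

lemma exists_Cc1_inner_eq_ellipSupport (hΩ : IsOpen Ω) (ha : a ≠ 0) (θ : ℝ) {n : E2 → E2}
    (hn : ContDiff ℝ 1 n) {K : Set E2} (hK : IsCompact K) (hKΩ : K ⊆ Ω)
    (hnK : ∀ x ∈ K, n x ≠ 0) :
    ∃ v : E2 → E2, Cc1 Ω v ∧ (∀ x, v x ∈ Ellip a θ) ∧
      ∀ x ∈ K, inner ℝ (n x) (v x) = ellipSupport a θ (n x) := by
  have hU : IsOpen (Ω ∩ {x | n x ≠ 0}) := hΩ.inter (isOpen_ne_fun hn.continuous continuous_const)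
  obtain ⟨χ, hχ, hχc, hχU, hχK, hχ01⟩ :=
    exists_contDiff_cutoff (n := 1) hK hU (Set.subset_inter hKΩ hnK)
  set v : E2 → E2 := fun x => χ x • ellipMaximizer a θ (n x)
  have hsupp : tsupport v ⊆ tsupport χ := closure_mono (Function.support_smul_subset_left χ _)
  have hv : ContDiff ℝ 1 v := by
    refine (contMDiff_of_tsupport fun x hx => ContDiffAt.contMDiffAt ?_).contDiff
    exact hχ.contDiffAt.smul
      ((contDiffAt_ellipMaximizer ha (hχU (hsupp hx)).2).comp x hn.contDiffAt)
  refine ⟨v, ⟨hv, hχc.smul_right, hsupp.trans (hχU.trans Set.inter_subset_left)⟩, fun x => ?_,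
    fun x hx => ?_⟩
  · exact smul_ellipMaximizer_mem_Ellip (abs_le.2 ⟨by linarith [(hχ01 x).1], (hχ01 x).2⟩) _
  · simp only [v, hχK x hx, one_smul, inner_ellipMaximizer]

lemma setIntegral_indicator_one_mul {α : Type*} [MeasurableSpace α] {μ : Measure α} {s t : Set α}
    (hs : MeasurableSet s) (hst : s ⊆ t) (f : α → ℝ) :
    ∫ x in t, s.indicator (fun _ => (1 : ℝ)) x * f x ∂μ = ∫ x in s, f x ∂μ := by
  simp_rw [← Set.indicator_mul_left, one_mul]
  rw [setIntegral_indicator hs, Set.inter_eq_self_of_subset_right hst]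

lemma DTV_indicator_pEllipse (hΩ : IsOpen Ω) (ha : a ≠ 0) (θ : ℝ) (hp : 0 < p) (hb : 0 < b)
    (hsub : pEllipse p b ⊆ Ω) :
    DTV Ω a θ ((pEllipse p b).indicator fun _ => (1 : ℝ)) =
      ENNReal.ofReal (∫ τ in (-Real.pi)..Real.pi,
        ellipSupport a θ (ellipseNormal b (ellipseCurve p b τ))) := by
  have hcurve : Continuous (ellipseCurve p b) := (contDiff_ellipseCurve (n := 0)).continuous
  have hnormal : Continuous (ellipseNormal b) := (contDiff_ellipseNormal (n := 0)).continuous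
  have hmem (τ : ℝ) : ellipseCurve p b τ ∈ Ω := hsub (ellipseCurve_mem_pEllipse hp.ne' hb.ne' τ)
  have hgreen {v : E2 → E2} (hv : ContDiff ℝ 1 v) :=
    (setIntegral_indicator_one_mul measurableSet_pEllipse hsub (divVec v)).trans
      (integral_divVec_pEllipse hp hb hv)
  apply le_antisymm
  · refine iSup₂_le fun v ⟨⟨hv, _⟩, hvE⟩ => ENNReal.ofReal_le_ofReal ?_
    have hv_cont := hv.continuous
    rw [hgreen hv]
    refine intervalIntegral.integral_mono (neg_le_self Real.pi_nonneg)
      (Continuous.intervalIntegrable (by fun_prop) _ _)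
      (Continuous.intervalIntegrable (by fun_prop) _ _)
      fun τ => inner_le_ellipSupport ha (hvE _ (hmem τ)) _
  · set K := ellipseCurve p b '' Set.Icc (-Real.pi) Real.pi
    obtain ⟨v, hv, hvE, hvK⟩ := exists_Cc1_inner_eq_ellipSupport hΩ ha θ
      (contDiff_ellipseNormal (b := b)) (isCompact_Icc.image hcurve : IsCompact K)
      (Set.image_subset_iff.2 fun τ _ => hmem τ)
      (Set.forall_mem_image.2 fun τ _ => ellipseNormal_ellipseCurve_ne_zero hp.ne' hb.ne' τ)
    refine le_iSup₂_of_le v ⟨hv, fun x _ => hvE x⟩ (ENNReal.ofReal_le_ofReal ?_)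
    rw [hgreen hv.1]
    refine (intervalIntegral.integral_congr fun τ hτ => (hvK _ ⟨τ, ?_, rfl⟩).symm).le
    rwa [Set.uIcc_of_le (neg_le_self Real.pi_nonneg)] at hτ

end Duality

theorem dtv_ellipse_theta_zero_general {Ω : Set E2} (hΩ : IsOpen Ω) {a p b : ℝ} (ha : a ≠ 0)
    (θ : ℝ) (hp : 0 < p) (hb : 0 < b) (hsub : pEllipse p b ⊆ Ω) :
    DTV Ω a θ ((pEllipse p b).indicator fun _ => (1 : ℝ)) =
      ENNReal.ofReal (p * ∫ τ in (0 : ℝ)..(2 * Real.pi),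
        ellipSupport a θ (vec2 (b * Real.cos τ) (Real.sin τ))) := by
  have hperiodic : Function.Periodic
      (fun τ => ellipSupport a θ (vec2 (b * Real.cos τ) (Real.sin τ))) (2 * Real.pi) := fun τ => by
    simp only [Real.cos_add_two_pi, Real.sin_add_two_pi]
  have hshift := hperiodic.intervalIntegral_add_eq 0 (-Real.pi)
  rw [zero_add, show -Real.pi + 2 * Real.pi = Real.pi by ring] at hshift
  simp only [DTV_indicator_pEllipse hΩ ha θ hp hb hsub, ellipseNormal_ellipseCurve hb.ne',
    ellipSupport_smul hp.le, intervalIntegral.integral_const_mul, hshift]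

/-- `DTV^{a,0}` of the characteristic function of the ellipse `pE^{b,0}`. -/
theorem dtv_ellipse_theta_zero (Ω : Set E2) (hΩo : IsOpen Ω) (hΩb : Bornology.IsBounded Ω)
    (a b p : ℝ) (ha : 0 < a) (ha1 : a ≤ 1) (hb : 0 < b) (hb1 : b < 1) (hp : 0 < p)
    (hsub : pEllipse p b ⊆ Ω) :
    DTV Ω a 0 ((pEllipse p b).indicator fun _ => (1 : ℝ)) =
      ENNReal.ofReal (p * ∫ τ in (0:ℝ)..(2 * Real.pi),
        Real.sqrt (b ^ 2 * Real.cos τ ^ 2 + a ^ 2 * Real.sin τ ^ 2)) := by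
  simpa [ellipSupport, vec2_apply_zero, vec2_apply_one, mul_pow] using
    dtv_ellipse_theta_zero_general hΩo ha.ne' 0 hp hb hsub
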